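/- arXiv:2503.03337 — 2 statements merged into one kernel-verified Lean document; each statement's English description precedes it below -/
import Mathlib

section
/- Let L = Σ_{j=0}^r p_j(x) ∂_x^j be a linear differential operator of order r with polynomial coefficients, d_j = deg p_j. Then there exists an operator L̃ = Σ_{j=0}^r q_j(x) 𝔡^j in k[x]⟨𝔡⟩ of order r with the same solution set as L (i.e., L̃ = x^N · L as operators after rewriting, up to a power of x factor making coefficients polynomial), such that deg q_r = d_r and deg q_j ≤ r + max_{ℓ ≥ j}(d_ℓ − ℓ) for all j. -/
open Polynomial

/-- The Euler operator `𝔡 = x ∂_x` as a `k`-linear endomorphism of `k[x]`. -/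
noncomputable def eulerOp (k : Type*) [Field k] : Module.End k (Polynomial k) :=
  LinearMap.mulLeft k (X : Polynomial k) * (derivative : Polynomial k →ₗ[k] Polynomial k)

theorem euler_descPochhammer (k : Type*) [Field k] (n : ℕ) :
    aeval (eulerOp k) (descPochhammer k n) =
      LinearMap.mulLeft k ((X : Polynomial k) ^ n) *
        ((derivative : Polynomial k →ₗ[k] Polynomial k) : Module.End k (Polynomial k)) ^ n := by
  induction n with
  | zero => ext; simp
  | succ n ih =>
    rw [descPochhammer_succ_right, mul_comm, map_mul, ih]
    refine LinearMap.ext fun f => ?_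
    rw [pow_succ' (_ : Module.End k (Polynomial k)) n]
    simp only [map_sub, aeval_X, map_natCast, eulerOp, Module.End.mul_apply, LinearMap.sub_apply,
      LinearMap.mulLeft_apply, Module.End.natCast_apply, derivative_mul, derivative_X_pow,
      nsmul_eq_mul]
    rcases n with _ | n
    · simp
    · simp only [Nat.add_sub_cancel]
      ring

/-- Rewriting a linear differential operator `L = ∑_{j=0}^r p_j(x) ∂_x^j` of order `r`
in terms of the Euler operator `𝔡 = x ∂_x`: there is an operator
`L̃ = ∑_{j=0}^r q_j(x) 𝔡^j` of order `r` with the same solution set, namely `L̃ = x^r · L`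
as operators, with `deg q_r = deg p_r` and `deg q_j ≤ r + max_{ℓ ≥ j} (deg p_ℓ - ℓ)`. -/
theorem diffop_to_euler_form (k : Type*) [Field k] [CharZero k]
    (r : ℕ) (p : Fin (r + 1) → Polynomial k) (hpr : p (Fin.last r) ≠ 0) :
    ∃ q : Fin (r + 1) → Polynomial k,
      (LinearMap.mulLeft k ((X : Polynomial k) ^ r)) *
          (∑ j : Fin (r + 1), LinearMap.mulLeft k (p j) *
            ((derivative : Polynomial k →ₗ[k] Polynomial k) : Module.End k (Polynomial k)) ^ (j : ℕ))
        = ∑ j : Fin (r + 1), LinearMap.mulLeft k (q j) * (eulerOp k) ^ (j : ℕ) ∧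
      q (Fin.last r) ≠ 0 ∧
      (q (Fin.last r)).natDegree = (p (Fin.last r)).natDegree ∧
      ∀ j : Fin (r + 1), ∃ ℓ : Fin (r + 1), j ≤ ℓ ∧
        ((q j).natDegree : ℤ) ≤ (r : ℤ) + (p ℓ).natDegree - (ℓ : ℕ) := by
  classical
  have hnd : ∀ n : ℕ, (descPochhammer k n).natDegree = n := fun n =>
    descPochhammer_natDegree k n
  set q : Fin (r + 1) → Polynomial k := fun j => ∑ l : Fin (r + 1),
    C ((descPochhammer k (l : ℕ)).coeff j) * (X ^ (r - (l : ℕ)) * p l) with hq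
  have hlast : q (Fin.last r) = p (Fin.last r) := by
    simp only [hq]
    rw [Finset.sum_eq_single (Fin.last r)]
    · have h := (monic_descPochhammer k r).coeff_natDegree
      rw [hnd] at h
      simp [h]
    · intro b _ hb
      have hlt : (b : ℕ) < r := by
        have := Fin.lt_last_iff_ne_last.mpr hb
        exact this
      rw [coeff_eq_zero_of_natDegree_lt (by rw [hnd]; exact hlt)]
      simp
    · simp
  refine ⟨q, ?_, by rw [hlast]; exact hpr, by rw [hlast], ?_⟩
  · have key : ∀ (l : Fin (r + 1)) (f : Polynomial k),
        X ^ (l : ℕ) * ((((derivative : Polynomial k →ₗ[k] Polynomial k) :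
          Module.End k (Polynomial k)) ^ (l : ℕ)) f) =
        ∑ j : Fin (r + 1), C ((descPochhammer k (l : ℕ)).coeff j) * ((eulerOp k ^ (j : ℕ)) f) := by
      intro l f
      have h := congrArg (fun T : Module.End k (Polynomial k) => T f) (euler_descPochhammer k l)
      simp only [Module.End.mul_apply, LinearMap.mulLeft_apply] at h
      rw [← h, aeval_eq_sum_range' (n := r + 1) (by rw [hnd]; exact l.2), LinearMap.sum_apply,
        Finset.sum_range]
      refine Finset.sum_congr rfl fun j _ => ?_
      rw [LinearMap.smul_apply, smul_eq_C_mul]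
    refine LinearMap.ext fun f => ?_
    simp only [Module.End.mul_apply, LinearMap.sum_apply, LinearMap.mulLeft_apply, hq,
      Finset.mul_sum, Finset.sum_mul]
    rw [Finset.sum_comm]
    refine Finset.sum_congr rfl fun l _ => ?_
    have hl : (X : Polynomial k) ^ r = X ^ (r - (l : ℕ)) * X ^ (l : ℕ) := by
      rw [← pow_add]
      congr 1
      omega
    calc _ = X ^ (r - (l : ℕ)) * p l * (X ^ (l : ℕ) * ((((derivative :
          Polynomial k →ₗ[k] Polynomial k) : Module.End k (Polynomial k)) ^ (l : ℕ)) f)) := by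
            rw [hl]
            ring
      _ = _ := by
        rw [key, Finset.mul_sum]
        refine Finset.sum_congr rfl fun j _ => ?_
        ring
  · intro j
    obtain ⟨l, hl, hmax⟩ := Finset.exists_max_image (Finset.Ici j)
      (fun l : Fin (r + 1) => (r - (l : ℕ)) + (p l).natDegree) ⟨j, by simp⟩
    refine ⟨l, by simpa using hl, ?_⟩
    have hb : (q j).natDegree ≤ (r - (l : ℕ)) + (p l).natDegree := by
      refine natDegree_sum_le_of_forall_le _ _ fun m _ => ?_
      by_cases hm : j ≤ m
      · refine le_trans ?_ (hmax m (by simpa using hm))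
        refine (natDegree_C_mul_le _ _).trans (natDegree_mul_le.trans ?_)
        simp
      · rw [coeff_eq_zero_of_natDegree_lt (by rw [hnd]; exact not_le.mp hm)]
        simp
    have := l.2
    omega
end

section
/- Let T ∈ k(x)^{n×n} be a strictly proper rational matrix with an irreducible state-space realisation T = B(xI_m − A)^{-1}C, let Δ ∈ k[x] be a polynomial divisible by all determinantal denominators φ_ℓ(T) (e.g., Δ = det M for a realisation T = XM^{-1}Y), let θ = ∂_x + T, a ∈ k[x]^n, and let 0 ≤ s₁ ≤ … ≤ s_r. Then every determinantal denominator φ_ℓ of the matrix K = [θ^{s₁}a | … | θ^{s_r}a] ∈ k(x)^{n×r} divides Δ^{s_r}. -/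
set_option synthInstance.maxHeartbeats 1000000

open Polynomial

/-- The standard derivative on the rational function field `k(x)`. -/
noncomputable def ratDeriv {k : Type*} [Field k] (f : RatFunc k) : RatFunc k :=
  algebraMap (Polynomial k) (RatFunc k)
      (derivative f.num * f.denom - f.num * derivative f.denom) /
    (algebraMap (Polynomial k) (RatFunc k) f.denom) ^ 2

/-- The pseudo-linear map `θ = ∂_x + T` on `k(x)^n`. -/
noncomputable def pseudoLin {k : Type*} [Field k] {n : ℕ}
    (T : Matrix (Fin n) (Fin n) (RatFunc k)) (v : Fin n → RatFunc k) : Fin n → RatFunc k :=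
  (fun i => ratDeriv (v i)) + T.mulVec v

/-- The determinantal denominator `φ_ℓ(R)`: the monic least common denominator in `k[x]`
of all minors of the rational matrix `R` of size at most `ℓ` (with `φ_0(R) = 1`). -/
noncomputable def detDen {k : Type*} [Field k] [DecidableEq k] {m p : ℕ} (ℓ : ℕ)
    (R : Matrix (Fin m) (Fin p) (RatFunc k)) : Polynomial k :=
  (Finset.univ : Finset (Σ s : Fin (ℓ + 1), (Fin (s : ℕ) → Fin m) × (Fin (s : ℕ) → Fin p))).lcm
    (fun t => ((R.submatrix t.2.1 t.2.2).det).denom)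


section helpers
open Matrix
variable {k : Type*} [Field k]

lemma ratDeriv_div (p q : k[X]) (hq : q ≠ 0) :
    ratDeriv (algebraMap k[X] (RatFunc k) p / algebraMap k[X] (RatFunc k) q) =
      algebraMap k[X] (RatFunc k) (derivative p * q - p * derivative q) /
        (algebraMap k[X] (RatFunc k) q) ^ 2 := by
  set f := algebraMap k[X] (RatFunc k) p / algebraMap k[X] (RatFunc k) q with hf
  have hd : f.denom ≠ 0 := RatFunc.denom_ne_zero f
  have hinj := RatFunc.algebraMap_injective k
  have hq' : algebraMap k[X] (RatFunc k) q ≠ 0 := by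
    rwa [Ne, map_eq_zero_iff _ hinj]
  have hd' : algebraMap k[X] (RatFunc k) f.denom ≠ 0 := by
    rwa [Ne, map_eq_zero_iff _ hinj]
  have h1 : f.num * q = p * f.denom := by
    apply hinj
    have := RatFunc.num_div_denom f
    rw [hf, div_eq_div_iff (by simpa [hf] using hd') hq'] at this
    rw [map_mul, map_mul]
    exact this
  have h2 := congrArg derivative h1
  rw [derivative_mul, derivative_mul] at h2
  unfold ratDeriv
  rw [div_eq_div_iff (pow_ne_zero 2 hd') (pow_ne_zero 2 hq')]
  rw [← map_pow, ← map_pow, ← map_mul, ← map_mul]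
  congr 1
  linear_combination (q * f.denom) * h2 - (f.denom * derivative q + q * derivative f.denom) * h1

lemma exists_frac (f : RatFunc k) : ∃ p q : k[X], q ≠ 0 ∧
    f = algebraMap k[X] (RatFunc k) p / algebraMap k[X] (RatFunc k) q :=
  ⟨f.num, f.denom, RatFunc.denom_ne_zero f, (RatFunc.num_div_denom f).symm⟩

lemma am_ne {q : k[X]} (hq : q ≠ 0) : algebraMap k[X] (RatFunc k) q ≠ 0 := by
  rwa [Ne, map_eq_zero_iff _ (RatFunc.algebraMap_injective k)]

lemma ratDeriv_add (f g : RatFunc k) : ratDeriv (f + g) = ratDeriv f + ratDeriv g := by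
  obtain ⟨p, q, hq, rfl⟩ := exists_frac f
  obtain ⟨u, v, hv, rfl⟩ := exists_frac g
  have hq' := am_ne hq
  have hv' := am_ne hv
  rw [div_add_div _ _ hq' hv', ← map_mul, ← map_mul, ← map_mul, ← map_add,
    ratDeriv_div _ _ (mul_ne_zero hq hv), ratDeriv_div _ _ hq, ratDeriv_div _ _ hv]
  simp only [derivative_mul, derivative_add, map_mul, map_add, map_sub]
  field_simp
  ring

lemma ratDeriv_mul (f g : RatFunc k) :
    ratDeriv (f * g) = ratDeriv f * g + f * ratDeriv g := by
  obtain ⟨p, q, hq, rfl⟩ := exists_frac f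
  obtain ⟨u, v, hv, rfl⟩ := exists_frac g
  have hq' := am_ne hq
  have hv' := am_ne hv
  rw [div_mul_div_comm, ← map_mul, ← map_mul,
    ratDeriv_div _ _ (mul_ne_zero hq hv), ratDeriv_div _ _ hq, ratDeriv_div _ _ hv]
  simp only [derivative_mul, map_mul, map_add, map_sub]
  field_simp
  ring

lemma ratDeriv_algebraMap (p : k[X]) :
    ratDeriv (algebraMap k[X] (RatFunc k) p) = algebraMap k[X] (RatFunc k) (derivative p) := by
  have := ratDeriv_div p 1 one_ne_zero
  simpa using this

lemma ratDeriv_zero : ratDeriv (0 : RatFunc k) = 0 := by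
  simpa using ratDeriv_algebraMap (0 : k[X])

lemma ratDeriv_sum {ι : Type*} (t : Finset ι) (f : ι → RatFunc k) :
    ratDeriv (∑ i ∈ t, f i) = ∑ i ∈ t, ratDeriv (f i) := by
  classical
  induction t using Finset.induction_on with
  | empty => simp [ratDeriv_zero]
  | insert a t h ih => rw [Finset.sum_insert h, Finset.sum_insert h, ratDeriv_add, ih]

lemma map_ratDeriv_mul {α β γ : Type*} [Fintype β]
    (M : Matrix α β (RatFunc k)) (N : Matrix β γ (RatFunc k)) :
    (M * N).map ratDeriv = M.map ratDeriv * N + M * N.map ratDeriv := by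
  ext i j
  simp [Matrix.mul_apply, ratDeriv_sum, ratDeriv_mul, Finset.sum_add_distrib]

lemma map_ratDeriv_algebraMap {α β : Type*} (M : Matrix α β k[X]) :
    (M.map (algebraMap k[X] (RatFunc k))).map ratDeriv =
      (M.map derivative).map (algebraMap k[X] (RatFunc k)) := by
  ext i j
  simp [ratDeriv_algebraMap]

/-- Schur complement bound. -/
lemma denom_schur {ι κ : Type*} [Fintype ι] [DecidableEq ι] [Fintype κ] [DecidableEq κ]
    (M : Matrix ι ι k[X]) (hM : M.det ≠ 0) (P : Matrix κ κ k[X]) (X : Matrix κ ι k[X])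
    (Y : Matrix ι κ k[X]) :
    (P.map (algebraMap k[X] (RatFunc k)) + X.map (algebraMap k[X] (RatFunc k)) *
      (M.map (algebraMap k[X] (RatFunc k)))⁻¹ * Y.map (algebraMap k[X] (RatFunc k))).det.denom
      ∣ M.det := by
  have hdet : (M.map (algebraMap k[X] (RatFunc k))).det = algebraMap k[X] (RatFunc k) M.det := by
    rw [RingHom.map_det]; rfl
  have hu : IsUnit (M.map (algebraMap k[X] (RatFunc k))).det := by
    rw [hdet]; exact (am_ne hM).isUnit
  let _ := Matrix.invertibleOfIsUnitDet _ hu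
  have key := Matrix.det_fromBlocks₁₁ (M.map (algebraMap k[X] (RatFunc k)))
    (-(Y.map (algebraMap k[X] (RatFunc k)))) (X.map (algebraMap k[X] (RatFunc k)))
    (P.map (algebraMap k[X] (RatFunc k)))
  rw [Matrix.invOf_eq_nonsing_inv, Matrix.mul_neg, sub_neg_eq_add] at key
  rw [RatFunc.denom_dvd hM]
  refine ⟨(Matrix.fromBlocks M (-Y) X P).det, ?_⟩
  rw [eq_div_iff (am_ne hM), mul_comm, ← hdet, ← key, RingHom.map_det]
  congr 1
  ext i j
  rcases i with i | i <;> rcases j with j | j <;> simp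

/-- The row blocks `R_i`. -/
noncomputable def rowBlk {m : ℕ} (L E : Matrix (Fin m) (Fin m) (RatFunc k)) :
    ℕ → Matrix (Fin m) (Fin m) (RatFunc k)
  | 0 => L⁻¹
  | i + 1 => rowBlk L E i * (E - ((i + 1 : ℕ) : RatFunc k) • (1 : Matrix _ _ _)) * L⁻¹

lemma rowBlk_deriv {m : ℕ} (L E : Matrix (Fin m) (Fin m) (RatFunc k)) (hLu : IsUnit L.det)
    (hL' : L.map ratDeriv = 1) (hE' : E.map ratDeriv = 0)
    (hN : ∀ i : ℕ, (E - ((i : ℕ) : RatFunc k) • (1 : Matrix _ _ _)).map ratDeriv = 0) (i : ℕ) :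
    (rowBlk L E i).map ratDeriv + L⁻¹ * E * rowBlk L E i = rowBlk L E (i + 1) := by
  have cancel : ∀ M N : Matrix (Fin m) (Fin m) (RatFunc k), M * L = N * L → M = N := by
    intro M N h
    have := congrArg (· * L⁻¹) h
    simpa [Matrix.mul_assoc, Matrix.mul_nonsing_inv L hLu] using this
  have hs : ∀ i, rowBlk L E (i + 1) * L =
      rowBlk L E i * (E - ((i + 1 : ℕ) : RatFunc k) • (1 : Matrix _ _ _)) := by
    intro i
    simp only [rowBlk]
    rw [Matrix.mul_assoc, Matrix.nonsing_inv_mul L hLu, Matrix.mul_one]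
  induction i with
  | zero =>
    apply cancel
    rw [hs]
    have h1 := map_ratDeriv_mul L⁻¹ L
    rw [Matrix.nonsing_inv_mul L hLu, hL', Matrix.mul_one] at h1
    have h0 : (1 : Matrix (Fin m) (Fin m) (RatFunc k)).map ratDeriv = 0 := by
      ext i j
      have h1 : ratDeriv (1 : RatFunc k) = 0 := by simpa using ratDeriv_algebraMap (1 : k[X])
      by_cases h : i = j
      · simp [h, h1]
      · simp [h, ratDeriv_zero]
    rw [h0] at h1
    simp only [rowBlk]
    rw [Matrix.add_mul, Matrix.mul_assoc _ L⁻¹ L, Matrix.nonsing_inv_mul L hLu,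
      eq_neg_of_add_eq_zero_left h1.symm]
    simp [Matrix.mul_sub]
    abel
  | succ i ih =>
    apply cancel
    rw [hs (i + 1)]
    have h1 := congrArg (fun M => M.map ratDeriv) (hs i)
    simp only [map_ratDeriv_mul, hL', hN, Matrix.mul_one, Matrix.mul_zero, add_zero] at h1
    rw [Matrix.add_mul, Matrix.mul_assoc _ _ L, hs i, eq_sub_of_add_eq h1]
    rw [sub_add_eq_add_sub, ← Matrix.mul_assoc, ← Matrix.add_mul, ih]
    rw [Matrix.mul_sub, Matrix.mul_sub]
    simp only [Matrix.mul_smul, Matrix.mul_one]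
    rw [Nat.cast_add (i + 1) 1, add_smul, Nat.cast_one, one_smul]
    abel

lemma vec_step {m n : ℕ} (T : Matrix (Fin n) (Fin n) (RatFunc k))
    (B : Matrix (Fin n) (Fin m) k[X]) (C : Matrix (Fin m) (Fin n) k[X])
    (L : Matrix (Fin m) (Fin m) (RatFunc k))
    (R : ℕ → Matrix (Fin m) (Fin m) (RatFunc k))
    (hT : T = B.map (algebraMap k[X] (RatFunc k)) * L⁻¹ * C.map (algebraMap k[X] (RatFunc k)))
    (hB : B.map derivative = 0)
    (hR0 : R 0 = L⁻¹)
    (hR : ∀ i, (R i).map ratDeriv + L⁻¹ * (C.map (algebraMap k[X] (RatFunc k)) *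
      B.map (algebraMap k[X] (RatFunc k))) * R i = R (i + 1))
    (a : Matrix (Fin n) (Fin 1) k[X]) (j : ℕ) :
    ∃ (p : Matrix (Fin n) (Fin 1) k[X]) (y : ℕ → Matrix (Fin m) (Fin 1) k[X]),
      (∀ i, j ≤ i → y i = 0) ∧
      Matrix.of (fun i (_ : Fin 1) =>
        (pseudoLin T)^[j] (fun idx => algebraMap k[X] (RatFunc k) (a idx 0)) i) =
      p.map (algebraMap k[X] (RatFunc k)) + ∑ i ∈ Finset.range j,
        B.map (algebraMap k[X] (RatFunc k)) * R i * (y i).map (algebraMap k[X] (RatFunc k)) := by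
  have hpl : ∀ v : Fin n → RatFunc k, Matrix.of (fun i (_ : Fin 1) => pseudoLin T v i) =
      (Matrix.of (fun i (_ : Fin 1) => v i)).map ratDeriv +
        T * Matrix.of (fun i (_ : Fin 1) => v i) := by
    intro v
    ext i j
    simp [pseudoLin, Matrix.mul_apply, Matrix.mulVec, dotProduct]
  induction j with
  | zero =>
    refine ⟨a, fun _ => 0, fun _ _ => rfl, ?_⟩
    ext i j
    have : j = 0 := Subsingleton.elim _ _
    simp [this]
  | succ j ih =>
    obtain ⟨p, y, hy, h⟩ := ih
    refine ⟨p.map derivative, fun i => (y i).map derivative +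
      (match i with | 0 => C * p | i + 1 => y i), ?_, ?_⟩
    · intro i hi
      obtain ⟨i, rfl⟩ : ∃ i', i = i' + 1 := ⟨i - 1, by omega⟩
      simp only
      rw [hy (i + 1) (by omega), hy i (by omega)]
      ext; simp
    · simp only [Function.iterate_succ_apply']
      rw [hpl, h]
      have hadd : ∀ M N : Matrix (Fin n) (Fin 1) (RatFunc k),
          (M + N).map ratDeriv = M.map ratDeriv + N.map ratDeriv := by
        intro M N; ext; simp [ratDeriv_add]
      have hsum : ∀ F : ℕ → Matrix (Fin n) (Fin 1) (RatFunc k),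
          (∑ i ∈ Finset.range j, F i).map ratDeriv =
            ∑ i ∈ Finset.range j, (F i).map ratDeriv := by
        intro F; ext; simp [Matrix.sum_apply, ratDeriv_sum]
      have hB0 : (B.map (algebraMap k[X] (RatFunc k))).map ratDeriv = 0 := by
        rw [map_ratDeriv_algebraMap, hB]; ext; simp
      have hma : ∀ M N : Matrix (Fin m) (Fin 1) k[X],
          (M + N).map (algebraMap k[X] (RatFunc k)) =
          M.map (algebraMap k[X] (RatFunc k)) + N.map (algebraMap k[X] (RatFunc k)) := by
        intro M N; ext; simp
      rw [hadd, hsum, map_ratDeriv_algebraMap, add_assoc]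
      congr 1
      simp only [hma, Matrix.mul_add, Finset.sum_add_distrib]
      rw [Finset.sum_range_succ, Finset.sum_range_succ' (n := j), hy j le_rfl]
      have hz : ((0 : Matrix (Fin m) (Fin 1) k[X]).map derivative).map
          (algebraMap k[X] (RatFunc k)) = 0 := by ext; simp
      rw [hz, Matrix.mul_zero, add_zero, Matrix.map_mul, hT, hR0]
      rw [Matrix.mul_sum, add_left_comm, ← Finset.sum_add_distrib, add_comm, ← add_assoc,
        ← Finset.sum_add_distrib]
      congr 1
      · refine Finset.sum_congr rfl fun i _ => ?_
        rw [map_ratDeriv_mul, map_ratDeriv_mul, hB0, map_ratDeriv_algebraMap, ← hR i]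
        simp only [Matrix.zero_mul, zero_add, Matrix.mul_add, Matrix.add_mul, Matrix.mul_assoc]
        abel
      · simp only [Matrix.mul_assoc]

/-- The block bidiagonal matrix. -/
noncomputable def bidiag {m : ℕ} (N : ℕ) (L E : Matrix (Fin m) (Fin m) k[X]) :
    Matrix (Fin N × Fin m) (Fin N × Fin m) k[X] :=
  Matrix.of fun u v => if u.1 = v.1 then L u.2 v.2 else
    if (u.1 : ℕ) + 1 = v.1 then
      -(E - (((u.1 : ℕ) + 1 : ℕ) : k[X]) • (1 : Matrix (Fin m) (Fin m) k[X])) u.2 v.2 else 0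

lemma bidiag_det {m : ℕ} (N : ℕ) (L E : Matrix (Fin m) (Fin m) k[X]) :
    (bidiag N L E).det = L.det ^ N := by
  have hbt : (bidiag N L E).BlockTriangular (fun u => u.1) := by
    intro u v h
    have h' : (v.1 : ℕ) < u.1 := h
    have h1 : u.1 ≠ v.1 := fun e => by rw [e] at h'; omega
    have h2 : ¬ ((u.1 : ℕ) + 1 = v.1) := by omega
    simp [bidiag, h1, h2]
  rw [hbt.det_fintype]
  have : ∀ i : Fin N, ((bidiag N L E).toSquareBlock (fun u => u.1) i).det = L.det := by
    intro i
    let e : Fin m ≃ {u : Fin N × Fin m // u.1 = i} :=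
      { toFun := fun a => ⟨(i, a), rfl⟩
        invFun := fun u => u.1.2
        left_inv := fun a => rfl
        right_inv := by rintro ⟨⟨u, a⟩, rfl⟩; rfl }
    rw [← Matrix.det_submatrix_equiv_self e]
    congr 1
    ext a b
    simp [bidiag, e, Matrix.toSquareBlock_def]
  simp [this]

lemma row_mul_bidiag {m n : ℕ} (N : ℕ) (L E : Matrix (Fin m) (Fin m) k[X])
    (B : Matrix (Fin n) (Fin m) k[X])
    (hLu : IsUnit (L.map (algebraMap k[X] (RatFunc k))).det) :
    (Matrix.of fun (u : Fin n) (v : Fin N × Fin m) => (B.map (algebraMap k[X] (RatFunc k)) *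
      rowBlk (L.map (algebraMap k[X] (RatFunc k))) (E.map (algebraMap k[X] (RatFunc k))) v.1) u v.2)
      * (bidiag N L E).map (algebraMap k[X] (RatFunc k)) =
    (Matrix.of fun (u : Fin n) (v : Fin N × Fin m) =>
      if (v.1 : ℕ) = 0 then B u v.2 else 0).map (algebraMap k[X] (RatFunc k)) := by
  set φ := algebraMap k[X] (RatFunc k) with hφ
  ext u ⟨j, b⟩
  have hNm : ∀ i : ℕ, (E - ((i : ℕ) : k[X]) • (1 : Matrix _ _ _)).map φ =
      E.map φ - ((i : ℕ) : RatFunc k) • (1 : Matrix _ _ _) := by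
    intro i
    ext a b
    by_cases h : a = b <;> simp [h]
  simp only [Matrix.mul_apply (m := Fin N × Fin m), Fintype.sum_prod_type, Matrix.of_apply,
    Matrix.map_apply]
  have hblk : ∀ i : Fin N, ∑ a, (B.map φ * rowBlk (L.map φ) (E.map φ) i) u a *
      φ (bidiag N L E (i, a) (j, b)) =
      if i = j then (B.map φ * rowBlk (L.map φ) (E.map φ) i * L.map φ) u b else
      if (i : ℕ) + 1 = j then
        -(B.map φ * rowBlk (L.map φ) (E.map φ) i *
          (E.map φ - (((i : ℕ) + 1 : ℕ) : RatFunc k) • (1 : Matrix (Fin m) (Fin m) (RatFunc k)))) u b else 0 := by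
    intro i
    split_ifs with h1 h2
    · rw [Matrix.mul_apply (M := B.map φ * _)]
      refine Finset.sum_congr rfl fun a _ => ?_
      simp [bidiag, h1]
    · rw [← hNm, Matrix.mul_apply (M := B.map φ * _), ← Finset.sum_neg_distrib]
      refine Finset.sum_congr rfl fun a _ => ?_
      rw [Matrix.map_apply, ← mul_neg, ← map_neg]
      congr 2
      simp only [bidiag, Matrix.of_apply, if_neg h1, if_pos h2]
    · refine Finset.sum_eq_zero fun a _ => ?_
      simp [bidiag, h1, h2]
  rw [Finset.sum_congr rfl fun i _ => hblk i]
  obtain ⟨j, hj⟩ := j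
  cases j with
  | zero =>
    rw [Finset.sum_eq_single ⟨0, hj⟩]
    · simp [rowBlk, Matrix.mul_assoc, Matrix.nonsing_inv_mul _ hLu]
    · intro i _ hi
      simp [hi]
    · simp
  | succ j =>
    rw [Finset.sum_eq_add (⟨j + 1, hj⟩ : Fin N) ⟨j, by omega⟩]
    · simp [rowBlk, Matrix.mul_assoc, Matrix.nonsing_inv_mul _ hLu]
    · simp
    · intro i _ hi
      have : ¬ ((i : ℕ) = j) := fun h => hi.2 (Fin.ext h)
      simp [hi.1, this]
    · simp
    · simp

end helpers

/-- Let `T` be strictly proper with an irreducible state-space realisation `T = B L⁻¹ C`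
(irreducibility encoded by `φ_ℓ(T) = φ_ℓ(L⁻¹)` for all `ℓ`), and let `Δ ∈ k[x]` be divisible
by all determinantal denominators `φ_ℓ(T)`. Then, for `0 ≤ s₁ ≤ … ≤ s_r`, every determinantal
denominator of the matrix `K = [θ^{s₁} a | ⋯ | θ^{s_r} a]` divides `Δ^{s_r}`. -/
theorem detDen_krylov_dvd_pow (k : Type*) [Field k] [DecidableEq k] [CharZero k] (m n r : ℕ)
    (T : Matrix (Fin n) (Fin n) (RatFunc k))
    (hsp : ∀ i j, T i j = 0 ∨ (T i j).intDegree < 0)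
    (A : Matrix (Fin m) (Fin m) k) (B : Matrix (Fin n) (Fin m) k) (C : Matrix (Fin m) (Fin n) k)
    (L : Matrix (Fin m) (Fin m) (RatFunc k))
    (hL : L = (RatFunc.X : RatFunc k) • (1 : Matrix (Fin m) (Fin m) (RatFunc k)) - A.map RatFunc.C)
    (hLu : IsUnit L.det)
    (hT : T = B.map RatFunc.C * L⁻¹ * C.map RatFunc.C)
    (hirr : ∀ ℓ : ℕ, detDen ℓ T = detDen ℓ L⁻¹)
    (Δ : Polynomial k) (hΔ : ∀ ℓ : ℕ, detDen ℓ T ∣ Δ)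
    (a : Fin n → Polynomial k)
    (s : Fin r → ℕ) (hs : Monotone s)
    (K : Matrix (Fin n) (Fin r) (RatFunc k))
    (hK : K = Matrix.of fun i j =>
      (pseudoLin T)^[s j] (fun idx => algebraMap (Polynomial k) (RatFunc k) (a idx)) i) :
    ∀ ℓ : ℕ, detDen ℓ K ∣ Δ ^ (Finset.univ.sup s) := by
  classical
  intro ℓ
  set φ := algebraMap k[X] (RatFunc k) with hφ
  have hCφ : ∀ {α β : Type} (M : Matrix α β k),
      M.map (RatFunc.C : k →+* RatFunc k) = (M.map Polynomial.C).map φ := by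
    intro α β M; ext; simp [hφ]
  -- polynomial versions
  have hLp : L = (A.charmatrix).map φ := by
    rw [hL, hCφ]
    ext i j
    by_cases h : i = j
    · subst h; simp [Matrix.charmatrix, hφ]
    · simp [Matrix.charmatrix, hφ, h]
  have hdetL : L.det = φ A.charpoly := by
    rw [hLp, Matrix.charpoly, RingHom.map_det]; rfl
  have hχ0 : A.charpoly ≠ 0 := (Matrix.charpoly_monic A).ne_zero
  -- charpoly divides Δ
  have hχ : A.charpoly ∣ Δ := by
    have h1 : (L⁻¹).det.denom ∣ Δ := by
      refine dvd_trans ?_ (hΔ m)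
      rw [hirr m]
      have := Finset.dvd_lcm (f := fun t : (Σ s : Fin (m + 1),
        (Fin (s : ℕ) → Fin m) × (Fin (s : ℕ) → Fin m)) =>
        (((L⁻¹).submatrix t.2.1 t.2.2).det).denom)
        (Finset.mem_univ ⟨Fin.last m, (id, id)⟩)
      simpa [detDen] using this
    refine dvd_trans ?_ h1
    have h2 := RatFunc.num_div_denom (L⁻¹).det
    set f := (L⁻¹).det with hf
    have h3 : f * φ A.charpoly = 1 := by
      rw [hf, ← hdetL, ← Matrix.det_mul, Matrix.nonsing_inv_mul L hLu, Matrix.det_one]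
    have hd := am_ne (RatFunc.denom_ne_zero f)
    refine ⟨f.num, ?_⟩
    apply RatFunc.algebraMap_injective k
    rw [map_mul]
    have h4 : φ f.num = f * φ f.denom := by
      rw [div_eq_iff hd] at h2; exact h2
    change φ f.denom = φ A.charpoly * φ f.num
    rw [h4]
    linear_combination (-φ f.denom) * h3
  refine dvd_trans ?_ (pow_dvd_pow_of_dvd hχ _)
  set N := Finset.univ.sup s with hN
  set Bp := B.map Polynomial.C with hBp
  set Cp := C.map Polynomial.C with hCp
  set Lp := A.charmatrix with hLp'
  set Ep := Cp * Bp with hEp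
  have hconst : ∀ {α β : Type} (M : Matrix α β k),
      (M.map Polynomial.C).map derivative = 0 := by
    intro α β M; ext1; simp
  have hEC : Ep = (C * B).map Polynomial.C := by
    rw [hEp, hCp, hBp, Matrix.map_mul]
  have hR := rowBlk_deriv (Lp.map φ) (Ep.map φ) (hLp ▸ hLu)
    (by
      rw [map_ratDeriv_algebraMap]
      ext i j
      by_cases h : i = j
      · subst h; simp [hLp', Matrix.charmatrix]
      · simp [hLp', Matrix.charmatrix, h])
    (by
      rw [map_ratDeriv_algebraMap, hEC, hconst]; ext; simp)
    (by
      intro i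
      have : (Ep.map φ - ((i : ℕ) : RatFunc k) • (1 : Matrix (Fin m) (Fin m) (RatFunc k))) =
          ((C * B - (i : k) • (1 : Matrix (Fin m) (Fin m) k)).map Polynomial.C).map φ := by
        rw [hEC]
        generalize C * B = F
        ext a b
        by_cases h : a = b <;> simp [h]
      rw [this, map_ratDeriv_algebraMap, hconst]; ext; simp)
  have hv := fun j => vec_step T Bp Cp L (rowBlk (Lp.map φ) (Ep.map φ))
    (by rw [hT, hCφ, hCφ]) (hconst B) (by rw [hLp]; rfl)
    (by intro i; rw [← hR i, hLp, hEp, Matrix.map_mul])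
    (Matrix.of fun i _ => a i) j
  choose p y hy hv using hv
  have hKe : K = (Matrix.of fun i j => p (s j) i 0).map φ +
      (Matrix.of fun (u : Fin n) (v : Fin N × Fin m) =>
        (Bp.map φ * rowBlk (Lp.map φ) (Ep.map φ) v.1) u v.2) *
      (Matrix.of fun (v : Fin N × Fin m) j => y (s j) v.1 v.2 0).map φ := by
    ext u j
    have hsj : s j ≤ N := Finset.le_sup (Finset.mem_univ j)
    have h1 := congrFun (congrFun (hv (s j)) u) 0
    simp only [Matrix.of_apply, Matrix.add_apply, Matrix.sum_apply, Matrix.map_apply] at h1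
    rw [hK]
    simp only [Matrix.of_apply, Matrix.add_apply, Matrix.map_apply]
    rw [h1]
    congr 1
    rw [Finset.sum_subset (Finset.range_subset_range.2 hsj)
      (fun i _ hi => by
        rw [hy (s j) i (by simpa using hi)]
        simp [Matrix.mul_apply]), ← Fin.sum_univ_eq_sum_range]
    rw [Matrix.mul_apply (m := Fin N × Fin m), Fintype.sum_prod_type]
    refine Finset.sum_congr rfl fun i _ => ?_
    rw [Matrix.mul_apply]
    rfl
  have hrow := row_mul_bidiag N Lp Ep Bp (hLp ▸ hLu)
  have hbd : (bidiag N Lp Ep).det = A.charpoly ^ N := bidiag_det N Lp Ep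
  have hbd0 : (bidiag N Lp Ep).det ≠ 0 := by rw [hbd]; exact pow_ne_zero _ hχ0
  have hbu : IsUnit ((bidiag N Lp Ep).map φ).det := by
    have : ((bidiag N Lp Ep).map φ).det = φ (bidiag N Lp Ep).det := by
      rw [RingHom.map_det]; rfl
    rw [this]
    exact (am_ne hbd0).isUnit
  have hrow' := congrArg (· * ((bidiag N Lp Ep).map φ)⁻¹) hrow
  rw [Matrix.mul_assoc, Matrix.mul_nonsing_inv _ hbu, Matrix.mul_one] at hrow'
  rw [hrow'] at hKe
  unfold detDen
  refine Finset.lcm_dvd fun t _ => ?_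
  rw [← hbd]
  obtain ⟨t, f, g⟩ := t
  have := denom_schur (bidiag N Lp Ep) hbd0
    ((Matrix.of fun i j => p (s j) i 0).submatrix f g)
    ((Matrix.of fun (u : Fin n) (v : Fin N × Fin m) =>
      if (v.1 : ℕ) = 0 then Bp u v.2 else 0).submatrix f id)
    ((Matrix.of fun (v : Fin N × Fin m) j => y (s j) v.1 v.2 0).submatrix id g)
  rw [hKe]
  exact this
end
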